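/- arXiv:1609.08751 — 2 statements merged into one kernel-verified Lean document; each statement's English description precedes it below -/
import Mathlib

section
/- Let d ≥ 2 and λ ∈ [0,1). With U(x) = F(x) − F(x*) and W(x) = F(x) − F(T x) for x ∈ Δ, define g(t) = inf { W(x) : x ∈ Δ, ‖x − x*‖ ≥ t } and α(t) = inf { g(‖y − x*‖) : y ∈ Δ, U(y) ≥ t } for t ≥ 0. Then α : [0,∞) → [0,∞) is non-decreasing, continuous, and positive definite: α(t) = 0 if and only if t = 0. -/
noncomputable section

open Metric Set Filter

/-- Euclidean space `ℝ^d` with `d = d' + 2 ≥ 2`. -/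
abbrev Euc (d : ℕ) := EuclideanSpace ℝ (Fin (d + 2))

/-- The standard basis vectors. -/
def e (d : ℕ) (j : Fin (d + 2)) : Euc d := EuclideanSpace.single j 1

/-- The Douglas–Rachford operator for the unit sphere and the line
`L_λ = {t e₁ + λ e₂}`, given by its explicit formula
`T x = (x₁/‖x‖) e₁ + ((1 − 1/‖x‖) x₂ + λ) e₂ + (1 − 1/‖x‖) ∑_{j=3}^d x_j e_j`. -/
def DR (d : ℕ) (lam : ℝ) (x : Euc d) : Euc d :=
  (x 0 / ‖x‖) • e d 0 + ((1 - 1 / ‖x‖) * x 1 + lam) • e d 1 +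
    ∑ j ∈ Finset.univ.filter (fun j : Fin (d + 2) => 2 ≤ (j : ℕ)),
      ((1 - 1 / ‖x‖) * x j) • e d j

/-- The intersection point `x* = √(1−λ²) e₁ + λ e₂`. -/
def xStar (d : ℕ) (lam : ℝ) : Euc d := Real.sqrt (1 - lam ^ 2) • e d 0 + lam • e d 1

/-- The Lyapunov-type function of Benoist:
`F(x) = ½‖x − λe₂‖² − λ log(1 + √(1 − x₁²)) + λ√(1 − x₁²) + (λ−1) log x₁`. -/
def F (d : ℕ) (lam : ℝ) (x : Euc d) : ℝ :=
  (1 / 2) * ‖x - lam • e d 1‖ ^ 2 - lam * Real.log (1 + Real.sqrt (1 - (x 0) ^ 2)) +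
    lam * Real.sqrt (1 - (x 0) ^ 2) + (lam - 1) * Real.log (x 0)

/-- `Δ = {x : 0 < x₁ ≤ 1}`. -/
def Delta (d : ℕ) : Set (Euc d) := {x | 0 < x 0 ∧ x 0 ≤ 1}

/-- `W(x) = F(x) − F(T x)`. -/
def W (d : ℕ) (lam : ℝ) (x : Euc d) : ℝ := F d lam x - F d lam (DR d lam x)

/-- `U(x) = F(x) − F(x*)`. -/
def U (d : ℕ) (lam : ℝ) (x : Euc d) : ℝ := F d lam x - F d lam (xStar d lam)

/-- `g(t) = inf { W(x) : x ∈ Δ, ‖x − x*‖ ≥ t }`. -/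
def g (d : ℕ) (lam : ℝ) (t : ℝ) : ℝ :=
  sInf {w : ℝ | ∃ x : Euc d, x ∈ Delta d ∧ t ≤ ‖x - xStar d lam‖ ∧ w = W d lam x}

/-- `α(t) = inf { g(‖y − x*‖) : y ∈ Δ, U(y) ≥ t }`. -/
def alp (d : ℕ) (lam : ℝ) (t : ℝ) : ℝ :=
  sInf {w : ℝ | ∃ y : Euc d, y ∈ Delta d ∧ t ≤ U d lam y ∧ w = g d lam ‖y - xStar d lam‖}


def psi (l p : ℝ) : ℝ := p * (l - p) / Real.sqrt (1 - p ^ 2)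

def PP (l c q : ℝ) : ℝ := (l ^ 2 - q ^ 2) / 2 - Real.sqrt (1 - q ^ 2) * psi l c
  + l * ((q - Real.log (1 + q)) - (c - Real.log (1 + c)))
  + (l - 1) * (Real.log (1 - q ^ 2) / 2 - Real.log (1 - c ^ 2) / 2)

lemma hasDerivAt_sq1 {q : ℝ} (h1 : -1 < q) (h2 : q < 1) :
    HasDerivAt (fun q : ℝ => Real.sqrt (1 - q ^ 2)) (-q / Real.sqrt (1 - q ^ 2)) q := by
  have hp : 0 < 1 - q ^ 2 := by nlinarith
  have h : HasDerivAt (fun q : ℝ => 1 - q ^ 2) (-(2 * q)) q := by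
    simpa using (hasDerivAt_pow 2 q).const_sub 1
  convert h.sqrt hp.ne' using 1
  field_simp

lemma hasDerivAt_lg1 {q : ℝ} (h1 : -1 < q) (h2 : q < 1) :
    HasDerivAt (fun q : ℝ => Real.log (1 - q ^ 2)) (-(2 * q) / (1 - q ^ 2)) q := by
  have hp : 0 < 1 - q ^ 2 := by nlinarith
  have h : HasDerivAt (fun q : ℝ => 1 - q ^ 2) (-(2 * q)) q := by
    simpa using (hasDerivAt_pow 2 q).const_sub 1
  exact h.log hp.ne'

lemma hasDerivAt_lg2 {q : ℝ} (h1 : -1 < q) :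
    HasDerivAt (fun q : ℝ => Real.log (1 + q)) (1 / (1 + q)) q := by
  have h : HasDerivAt (fun q : ℝ => 1 + q) 1 q := by
    simpa using (hasDerivAt_id q).const_add 1
  exact h.log (by linarith)

lemma PP_deriv (l c : ℝ) {q : ℝ} (h1 : -1 < q) (h2 : q < 1) :
    HasDerivAt (PP l c) (q / Real.sqrt (1 - q ^ 2) * (psi l c - psi l q)) q := by
  have hp : 0 < 1 - q ^ 2 := by nlinarith
  have hs : 0 < Real.sqrt (1 - q ^ 2) := Real.sqrt_pos.2 hp
  have hss : Real.sqrt (1 - q ^ 2) ^ 2 = 1 - q ^ 2 := Real.sq_sqrt hp.le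
  have a1 : HasDerivAt (fun q : ℝ => (l ^ 2 - q ^ 2) / 2) (-q) q := by
    have := ((hasDerivAt_pow 2 q).const_sub (l ^ 2)).div_const 2
    refine this.congr_deriv ?_
    norm_num
    ring
  have a2 := (hasDerivAt_sq1 h1 h2).mul_const (psi l c)
  have a3 := ((((hasDerivAt_id q).sub (hasDerivAt_lg2 h1)).sub_const (c - Real.log (1 + c)))).const_mul l
  have a4 := ((((hasDerivAt_lg1 h1 h2).div_const 2).sub_const (Real.log (1 - c ^ 2) / 2))).const_mul (l - 1)
  have := ((a1.sub a2).add a3).add a4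
  refine (this.congr_deriv ?_)
  have e2 : q / Real.sqrt (1 - q ^ 2) * psi l q = q ^ 2 * (l - q) / (1 - q ^ 2) := by
    unfold psi
    rw [div_mul_div_comm, Real.mul_self_sqrt hp.le]; ring
  rw [mul_sub (q / Real.sqrt (1 - q ^ 2)), e2]
  have : (1 + q) ≠ 0 := by linarith
  have e3 : (1 - q ^ 2) ≠ 0 := hp.ne'
  have e4 : 1 - q ≠ 0 := by linarith
  have : -q + l * (1 - 1 / (1 + q)) + (l - 1) * (-(2 * q) / (1 - q ^ 2) / 2) = - (q ^ 2 * (l - q) / (1 - q ^ 2)) := by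
    rw [show (1 - q ^ 2) = (1 - q) * (1 + q) by ring]
    field_simp
    ring
  rw [neg_div]
  linear_combination this

lemma PP_diag {l c : ℝ} (hc0 : 0 ≤ c) (hc : c < 1) : PP l c c = (l - c) ^ 2 / 2 := by
  have hp : 0 < 1 - c ^ 2 := by nlinarith
  have hs : 0 < Real.sqrt (1 - c ^ 2) := Real.sqrt_pos.2 hp
  have : Real.sqrt (1 - c ^ 2) * psi l c = c * (l - c) := by unfold psi; field_simp
  unfold PP; rw [this]; ring

lemma PP_cont (l c : ℝ) {a b : ℝ} (ha : 0 ≤ a) (hb : b < 1) : ContinuousOn (PP l c) (Icc a b) :=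
  fun q hq => (PP_deriv l c (by linarith [hq.1]) (by linarith [hq.2])).continuousAt.continuousWithinAt

lemma PP_mono (l c : ℝ) {a b : ℝ} (ha : 0 ≤ a) (hab : a ≤ b) (hb : b < 1)
    (h : ∀ p, a < p → p < b → psi l p ≤ psi l c) : PP l c a ≤ PP l c b := by
  refine monotoneOn_of_deriv_nonneg (convex_Icc a b) (PP_cont l c ha hb) ?_ ?_
    (left_mem_Icc.2 hab) (right_mem_Icc.2 hab) hab
  · intro p hp; rw [interior_Icc] at hp
    exact (PP_deriv l c (by linarith [hp.1]) (by linarith [hp.2])).differentiableAt.differentiableWithinAt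
  · intro p hp; rw [interior_Icc] at hp
    rw [(PP_deriv l c (by linarith [hp.1]) (by linarith [hp.2])).deriv]
    have := h p hp.1 hp.2
    have : 0 ≤ p := by linarith [hp.1]
    apply mul_nonneg (by positivity) (by linarith)

lemma PP_smono (l c : ℝ) {a b : ℝ} (ha : 0 ≤ a) (hab : a < b) (hb : b < 1)
    (h : ∀ p, a < p → p < b → psi l p < psi l c) : PP l c a < PP l c b := by
  refine strictMonoOn_of_deriv_pos (convex_Icc a b) (PP_cont l c ha hb) ?_
    (left_mem_Icc.2 hab.le) (right_mem_Icc.2 hab.le) hab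
  · intro p hp; rw [interior_Icc] at hp
    rw [(PP_deriv l c (by linarith [hp.1]) (by linarith [hp.2])).deriv]
    have := h p hp.1 hp.2
    have h0 : 0 < p := by linarith [hp.1]
    have : 0 < 1 - p ^ 2 := by nlinarith [hp.2]
    apply mul_pos (by positivity) (by linarith)

lemma PP_anti (l c : ℝ) {a b : ℝ} (ha : 0 ≤ a) (hab : a ≤ b) (hb : b < 1)
    (h : ∀ p, a < p → p < b → psi l c ≤ psi l p) : PP l c b ≤ PP l c a := by
  refine antitoneOn_of_deriv_nonpos (convex_Icc a b) (PP_cont l c ha hb) ?_ ?_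
    (left_mem_Icc.2 hab) (right_mem_Icc.2 hab) hab
  · intro p hp; rw [interior_Icc] at hp
    exact (PP_deriv l c (by linarith [hp.1]) (by linarith [hp.2])).differentiableAt.differentiableWithinAt
  · intro p hp; rw [interior_Icc] at hp
    rw [(PP_deriv l c (by linarith [hp.1]) (by linarith [hp.2])).deriv]
    have := h p hp.1 hp.2
    have : 0 ≤ p := by linarith [hp.1]
    apply mul_nonpos_of_nonneg_of_nonpos (by positivity) (by linarith)

lemma PP_santi (l c : ℝ) {a b : ℝ} (ha : 0 ≤ a) (hab : a < b) (hb : b < 1)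
    (h : ∀ p, a < p → p < b → psi l c < psi l p) : PP l c b < PP l c a := by
  refine strictAntiOn_of_deriv_neg (convex_Icc a b) (PP_cont l c ha hb) ?_
    (left_mem_Icc.2 hab.le) (right_mem_Icc.2 hab.le) hab
  · intro p hp; rw [interior_Icc] at hp
    rw [(PP_deriv l c (by linarith [hp.1]) (by linarith [hp.2])).deriv]
    have := h p hp.1 hp.2
    have h0 : 0 < p := by linarith [hp.1]
    have : 0 < 1 - p ^ 2 := by nlinarith [hp.2]
    apply mul_neg_of_pos_of_neg (by positivity) (by linarith)

/-- case l ≤ c -/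
lemma PP_case1 {l c q : ℝ} (hl : 0 ≤ l) (hlc : l ≤ c) (hc : c < 1) (hq0 : 0 ≤ q) (hq : q < 1)
    (hne : q ≠ c) : 0 < PP l c q := by
  have hd := PP_diag (l := l) (hl.trans hlc) hc
  have hd0 : 0 ≤ PP l c c := by rw [hd]; positivity
  have hp : 0 < 1 - c ^ 2 := by nlinarith
  have hs : 0 < Real.sqrt (1 - c ^ 2) := Real.sqrt_pos.2 hp
  rcases lt_or_gt_of_ne hne with h | h
  · refine lt_of_le_of_lt hd0 (PP_santi l c hq0 h hc ?_)
    intro p hp1 hp2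
    have hp' : 0 < 1 - p ^ 2 := by nlinarith
    have hs' : 0 < Real.sqrt (1 - p ^ 2) := Real.sqrt_pos.2 hp'
    have hss : Real.sqrt (1 - c ^ 2) ≤ Real.sqrt (1 - p ^ 2) := Real.sqrt_le_sqrt (by nlinarith)
    unfold psi
    rw [div_lt_div_iff₀ hs hs']
    have k1 : c * (l - c) ≤ 0 := by nlinarith
    have k2 : c * (l - c) < p * (l - p) ∨ False := by left; nlinarith
    rcases k2 with k2 | k2
    · nlinarith
    · exact k2.elim
  · refine lt_of_le_of_lt hd0 (PP_smono l c (hl.trans hlc) h hq ?_)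
    intro p hp1 hp2
    have hp' : 0 < 1 - p ^ 2 := by nlinarith
    have hs' : 0 < Real.sqrt (1 - p ^ 2) := Real.sqrt_pos.2 hp'
    have hss : Real.sqrt (1 - p ^ 2) ≤ Real.sqrt (1 - c ^ 2) := Real.sqrt_le_sqrt (by nlinarith)
    unfold psi
    rw [div_lt_div_iff₀ hs' hs]
    have k1 : c * (l - c) ≤ 0 := by nlinarith
    have k2 : p * (l - p) < c * (l - c) := by nlinarith
    nlinarith

/-- case c < l, q ≥ c -/
lemma PP_case2a {l c q : ℝ} (hc0 : 0 ≤ c) (hlc : c < l) (hl : l < 1) (hq0 : c ≤ q) (hq : q ≤ l) :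
    0 < PP l c q := by
  have hd := PP_diag (l := l) hc0 (hlc.trans hl)
  rcases hq0.eq_or_lt with rfl | hcq
  · rw [hd]; have : 0 < l - c := by linarith
    positivity
  have hp : 0 < 1 - c ^ 2 := by nlinarith
  have hs : 0 < Real.sqrt (1 - c ^ 2) := Real.sqrt_pos.2 hp
  have hD : ∀ p, c ≤ p → p ≤ q → HasDerivAt (fun p => PP l c p + (p - c) ^ 2 / 2)
      (p / Real.sqrt (1 - p ^ 2) * (psi l c - psi l p) + (p - c)) p := by
    intro p h1 h2
    have a := ((((hasDerivAt_id p).sub_const c).pow 2).div_const 2)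
    refine ((PP_deriv l c (q := p) (by linarith) (by linarith)).add a).congr_deriv ?_
    simp
  have key : (fun p => PP l c p + (p - c) ^ 2 / 2) c < (fun p => PP l c p + (p - c) ^ 2 / 2) q := by
    refine strictMonoOn_of_deriv_pos (f := fun p => PP l c p + (p - c) ^ 2 / 2) (convex_Icc c q) ?_ ?_
      (left_mem_Icc.2 hcq.le) (right_mem_Icc.2 hcq.le) hcq
    · intro p hp
      exact (hD p hp.1 hp.2).continuousAt.continuousWithinAt
    · intro p hp
      rw [interior_Icc] at hp
      obtain ⟨h1, h2⟩ := hp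
      rw [(hD p h1.le h2.le).deriv]
      have hp' : 0 < 1 - p ^ 2 := by nlinarith
      have hs' : 0 < Real.sqrt (1 - p ^ 2) := Real.sqrt_pos.2 hp'
      have hss : Real.sqrt (1 - p ^ 2) ≤ Real.sqrt (1 - c ^ 2) := Real.sqrt_le_sqrt (by nlinarith)
      have q1 := Real.sq_sqrt hp.le
      have q2 := Real.sq_sqrt hp'.le
      unfold psi
      set u := Real.sqrt (1 - c ^ 2)
      set v := Real.sqrt (1 - p ^ 2)
      have hpc : 0 < p := by linarith
      -- replace 1/(u v) by 1/u^2
      have b1 : p / v * (c * (l - c) / u) ≥ p * (c * (l - c)) / (1 - c ^ 2) := by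
        rw [← q1, div_mul_div_comm]
        apply div_le_div_of_nonneg_left
        · have : 0 ≤ l - c := by linarith
          positivity
        · positivity
        · nlinarith
      have b2 : p / v * (p * (l - p) / v) = p ^ 2 * (l - p) / (1 - p ^ 2) := by
        rw [← q2]; field_simp
      have b3 : 0 < p * (c * (l - c)) / (1 - c ^ 2) - p ^ 2 * (l - p) / (1 - p ^ 2) + (p - c) := by
        have : p * (c * (l - c)) / (1 - c ^ 2) - p ^ 2 * (l - p) / (1 - p ^ 2) + (p - c)
          = (p - c) * (1 + c * p / (1 + c)) / (1 + p)
            + (1 - l) * (p ^ 2 / (1 - p ^ 2) - p * c / (1 - c ^ 2)) := by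
          rw [show (1 - c ^ 2) = (1 - c) * (1 + c) by ring, show (1 - p ^ 2) = (1 - p) * (1 + p) by ring]
          have : 1 - c ≠ 0 := by linarith
          have : 1 + c ≠ 0 := by linarith
          have : 1 - p ≠ 0 := by linarith
          have : 1 + p ≠ 0 := by linarith
          field_simp
          ring
        rw [this]
        have c1 : p * c / (1 - c ^ 2) ≤ p ^ 2 / (1 - p ^ 2) := by
          rw [div_le_div_iff₀ hp hp']
          nlinarith [mul_nonneg (mul_nonneg hpc.le (sub_nonneg.2 h1.le)) (by positivity : (0:ℝ) ≤ 1 + p * c)]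
        have c2 : 0 < (p - c) * (1 + c * p / (1 + c)) / (1 + p) := by
          have : 0 < p - c := by linarith
          positivity
        have c3 := mul_nonneg (sub_nonneg.2 hl.le) (sub_nonneg.2 c1)
        linarith
      rw [mul_sub, b2]; linarith
  simp only [sub_self] at key
  rw [hd] at key
  nlinarith

lemma PP_case2 {l c q : ℝ} (hc0 : 0 ≤ c) (hlc : c < l) (hl : l < 1) (hq0 : c ≤ q) (hq : q < 1) :
    0 < PP l c q := by
  rcases le_total q l with h | h
  · exact PP_case2a hc0 hlc hl hq0 h
  · refine lt_of_lt_of_le (PP_case2a hc0 hlc hl hlc.le le_rfl) (PP_mono l c (by linarith) h hq ?_)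
    intro p h1 h2
    have : psi l p ≤ 0 := by
      unfold psi
      apply div_nonpos_of_nonpos_of_nonneg _ (Real.sqrt_nonneg _)
      nlinarith
    have : 0 ≤ psi l c := by
      unfold psi
      apply div_nonneg _ (Real.sqrt_nonneg _)
      nlinarith
    linarith

lemma poly1 {w : ℝ} (h0 : 0 < w) (h1 : w ≤ 3 / 7) :
    0 < 38/315 - w + 1039/315*w^2 - 6*w^3 + 437/45*w^4 - 14*w^5 + 1249/45*w^6 - 14*w^7 + 109/9*w^8
      + 451/45*w^10 + 14*w^11 - 697/45*w^12 + 14*w^13 - 1739/315*w^14 + 6*w^15 - 913/315*w^16 + w^17 := by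
  have hy : 0 ≤ 3 / 7 - w := by linarith
  have e1 : 0 < 38/315 - w + 1039/315*w^2 - 6*w^3 + 437/45*w^4 - 14*w^5 + 21*w^6 := by
    have : 38/315 - w + 1039/315*w^2 - 6*w^3 + 437/45*w^4 - 14*w^5 + 21*w^6
      = (7/3)^6 * ((61196/756315) * w^6 + (1447/36015) * w^5 * (3/7-w) + (2503/36015) * w^4 * (3/7-w)^2 + (172/2205) * w^3 * (3/7-w)^3
         + (1402/5145) * w^2 * (3/7-w)^4 + (31/105) * w * (3/7-w)^5 + (38/315) * (3/7-w)^6) := by ring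
    rw [this]; positivity
  have e2 : 0 ≤ w^6 * (1249/45 - 21 - 14*w) := by
    apply mul_nonneg (by positivity); linarith
  have e3 : 0 ≤ w^10 * (451/45 - 697/45*w^2 - 1739/315*w^4 - 913/315*w^6) := by
    have a : w^2 ≤ 1/4 := by nlinarith
    have b : w^4 ≤ 1/4 := by nlinarith [sq_nonneg w]
    have c : w^6 ≤ 1/4 := by nlinarith [sq_nonneg w, sq_nonneg (w^2)]
    apply mul_nonneg (by positivity); linarith
  have e4 : 0 ≤ 109/9*w^8 + 14*w^11 + 14*w^13 + 6*w^15 + w^17 := by positivity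
  nlinarith [e1, e2, e3, e4]

lemma polyK_large {c u δ : ℝ} (hc0 : 7/10 ≤ c) (hc : c < 1) (hd : 0 < δ) (hd1 : δ ≤ 1 - c)
    (hu : 0 < u) (huc : u ^ 2 = 1 - c ^ 2) :
    0 < δ^2/2 + c*δ - c*δ/u + δ*(c^3/3+c^5/5+c^7/7) + (c^4/12+c^6/30+c^8/56) := by
  set A := c/u - c - (c^3/3+c^5/5+c^7/7) with hA
  set B := c^4/12+c^6/30+c^8/56 with hB
  have i : 0 < B - 1/72 := by
    have a : (7/10)^4 ≤ c^4 := by gcongr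
    have : 0 ≤ c^6/30+c^8/56 := by positivity
    norm_num at a; linarith
  have ii : 0 < (B - 1/72) + (1-c)*(1/6 - A) := by
    obtain ⟨w, hw⟩ : ∃ w, w = u / (1 + c) := ⟨_, rfl⟩
    have hw0 : 0 < w := by rw [hw]; positivity
    have hcp : 1 + c ≠ 0 := by linarith
    have hu' : u = w * (1 + c) := by rw [hw]; field_simp
    have hw2 : w ^ 2 * (1 + c) = 1 - c := by
      have : w^2 * (1+c)^2 = (1-c)*(1+c) := by rw [← mul_pow, ← hu']; linarith
      have h2 : (w^2 * (1+c) - (1-c)) * (1 + c) = 0 := by linear_combination this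
      have := (mul_eq_zero.1 h2).resolve_right hcp
      linarith
    have hwle : w ≤ 3/7 := by
      by_contra h
      push Not at h
      have : 9/49 < w^2 := by nlinarith
      nlinarith
    have hcw : c = (1 - w^2)/(1+w^2) := by
      rw [eq_div_iff (by positivity)]; linarith
    have huw : u = 2*w/(1+w^2) := by
      rw [hu', hcw]; field_simp; ring
    have := poly1 hw0 hwle
    have e : (B - 1/72) + (1-c)*(1/6 - A) = (38/315 - w + 1039/315*w^2 - 6*w^3 + 437/45*w^4 - 14*w^5 + 1249/45*w^6 - 14*w^7 + 109/9*w^8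
      + 451/45*w^10 + 14*w^11 - 697/45*w^12 + 14*w^13 - 1739/315*w^14 + 6*w^15 - 913/315*w^16 + w^17) / (1+w^2)^8 := by
      have t : (1 - c) * (c / u - c) = c * w * (1 - u) := by
        have : 1 - c = w * u := by rw [← hw2, hu']; ring
        rw [this]; field_simp
      have : (B - 1/72) + (1-c)*(1/6 - A) = B - 1/72 + (1-c)*(1/6 + (c^3/3+c^5/5+c^7/7)) - c * w * (1-u) := by
        rw [← t, hA]; ring
      rw [this, hB, huw, hcw]
      field_simp
      ring
    rw [e]; positivity
  have : δ^2/2 + c*δ - c*δ/u + δ*(c^3/3+c^5/5+c^7/7) + B = (δ - 1/6)^2/2 + ((B - 1/72) + δ*(1/6 - A)) := by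
    rw [hA]; ring
  rw [this]
  have h3 : 0 < (B - 1/72) + δ*(1/6 - A) := by
    rcases le_total A (1/6) with h | h
    · have := mul_nonneg hd.le (sub_nonneg.2 h); linarith
    · nlinarith
  positivity

lemma polyK_small {c u δ : ℝ} (hc0 : 0 ≤ c) (hc : c ≤ 7/10) (hd : 0 < δ)
    (hu : 0 < u) (huc : u ^ 2 = 1 - c ^ 2) :
    0 < δ^2/2 + c*δ - c*δ/u + δ*(c^3/3+c^5/5+c^7/7) + (c^4/12+c^6/30+c^8/56) := by
  have hu1 : 7/10 ≤ u := by
    by_contra h; push Not at h; nlinarith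
  have hu2 : 714/1000 ≤ u := by
    by_contra h; push Not at h; nlinarith
  have e : c/u - c = c^3/(u*(1+u)) := by
    have : c^3 = c*(1-u^2) := by rw [huc]; ring
    rw [this]; field_simp; ring
  have e2 : c^3/(u*(1+u)) ≤ c^3/(122/100) := by
    apply div_le_div_of_nonneg_left (by positivity) (by norm_num); nlinarith
  have e3 : c*δ - c*δ/u ≥ - (δ * (c^3/(122/100))) := by
    have := mul_le_mul_of_nonneg_left (e ▸ e2) hd.le
    have h : c*δ - c*δ/u = - (δ * (c/u - c)) := by ring
    rw [h]; linarith
  have e4 : 0 ≤ δ*(c^5/5+c^7/7) + (c^6/30+c^8/56) := by positivity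
  have e5 : c^3 * (100/122 - 1/3) ≤ 2/5 * c^2 := by nlinarith [sq_nonneg c]
  have e6 := mul_le_mul_of_nonneg_left e5 hd.le
  have e7 : 0 < δ^2/2 - δ*(2/5*c^2) + c^4/12 := by
    nlinarith [sq_nonneg (2/5*δ - c^2/5*1), sq_nonneg (δ - 2/5*c^2), sq_nonneg (c^2), mul_pos hd hd, sq_nonneg (δ - 9/20*c^2)]
  nlinarith

lemma J_bound {l c : ℝ} (hc0 : 0 ≤ c) (hcl : c ≤ l) (hl : l < 1) :
    l*(c^3/3+c^5/5+c^7/7) - (c^4/4+c^6/6+c^8/8) ≤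
      l*(Real.log (1+c) - Real.log (1-c^2)/2 - c) + c^2/2 + Real.log (1-c^2)/2 := by
  set f : ℝ → ℝ := fun c => l*(Real.log (1+c) - Real.log (1-c^2)/2 - c) + c^2/2 + Real.log (1-c^2)/2
    - (l*(c^3/3+c^5/5+c^7/7) - (c^4/4+c^6/6+c^8/8)) with hf
  have hD : ∀ p, 0 ≤ p → p < 1 → HasDerivAt f (p^8*(l-p)/(1-p^2)) p := by
    intro p h1 h2
    have hp : 0 < 1 - p ^ 2 := by nlinarith
    have a1 := hasDerivAt_lg2 (q := p) (by linarith)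
    have a2 := (hasDerivAt_lg1 (q := p) (by linarith) h2).div_const 2
    have pw : ∀ n : ℕ, HasDerivAt (fun x : ℝ => x^n) (n * p^(n-1)) p := fun n => hasDerivAt_pow n p
    have b := (((((a1.sub a2).sub (hasDerivAt_id p)).const_mul l).add ((pw 2).div_const 2)).add a2).sub
      ((((((pw 3).div_const 3).add ((pw 5).div_const 5)).add ((pw 7).div_const 7)).const_mul l).sub
      ((((pw 4).div_const 4).add ((pw 6).div_const 6)).add ((pw 8).div_const 8)))
    refine b.congr_deriv ?_
    have : 1 - p ≠ 0 := by linarith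
    have : 1 + p ≠ 0 := by linarith
    rw [show (1 - p ^ 2) = (1 - p) * (1 + p) by ring]
    norm_num
    field_simp
    ring
  have hm : f 0 ≤ f c := by
    refine monotoneOn_of_deriv_nonneg (convex_Icc 0 c) ?_ ?_ ?_
      (left_mem_Icc.2 hc0) (right_mem_Icc.2 hc0) hc0
    · intro p hp
      exact (hD p hp.1 (by linarith [hp.2])).continuousAt.continuousWithinAt
    · intro p hp; rw [interior_Icc] at hp
      exact (hD p hp.1.le (by linarith [hp.2])).differentiableAt.differentiableWithinAt
    · intro p hp; rw [interior_Icc] at hp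
      rw [(hD p hp.1.le (by linarith [hp.2])).deriv]
      have : 0 < p := hp.1
      have : 0 < 1 - p ^ 2 := by nlinarith [hp.2]
      have : 0 ≤ l - p := by linarith [hp.2]
      positivity
  have h0 : f 0 = 0 := by simp [hf]
  rw [h0] at hm
  simp only [hf] at hm
  linarith

lemma PP_zero {l c : ℝ} (hc0 : 0 ≤ c) (hlc : c < l) (hl : l < 1) : 0 < PP l c 0 := by
  have hp : 0 < 1 - c ^ 2 := by nlinarith
  have hs : 0 < Real.sqrt (1 - c ^ 2) := Real.sqrt_pos.2 hp
  have hss : Real.sqrt (1 - c ^ 2) ^ 2 = 1 - c ^ 2 := Real.sq_sqrt hp.le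
  have hJ := J_bound hc0 hlc.le hl
  have hK : 0 < (l-c)^2/2 + c*(l-c) - c*(l-c)/Real.sqrt (1 - c ^ 2)
      + (l-c)*(c^3/3+c^5/5+c^7/7) + (c^4/12+c^6/30+c^8/56) := by
    rcases le_total c (7/10) with h | h
    · exact polyK_small hc0 h (by linarith) hs hss
    · exact polyK_large h (by linarith) (by linarith) (by linarith) hs hss
  unfold PP psi
  simp
  nlinarith [hJ, hK]

lemma psi_concave {l b : ℝ} (hl0 : 0 ≤ l) (hl : l < 1) (hb : b < 1) : ConcaveOn ℝ (Icc 0 b) (psi l) := by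
  have hD : ∀ p, -1 < p → p < 1 → HasDerivAt (psi l) ((l - 2*p + p^3)/(Real.sqrt (1-p^2))^3) p := by
    intro p h1 h2
    have hp : 0 < 1 - p ^ 2 := by nlinarith
    have hs : 0 < Real.sqrt (1 - p ^ 2) := Real.sqrt_pos.2 hp
    have hss : Real.sqrt (1 - p ^ 2) ^ 2 = 1 - p ^ 2 := Real.sq_sqrt hp.le
    have a := ((hasDerivAt_id p).mul ((hasDerivAt_id p).const_sub l)).div (hasDerivAt_sq1 h1 h2) hs.ne'
    refine a.congr_deriv ?_
    simp only [id, Pi.mul_apply]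
    field_simp
    rw [hss]; ring
  have hD2 : ∀ p, -1 < p → p < 1 → HasDerivAt (fun p => (l - 2*p + p^3)/(Real.sqrt (1-p^2))^3)
      ((3*l*p - 2 - p^2)/(Real.sqrt (1-p^2))^5) p := by
    intro p h1 h2
    have hp : 0 < 1 - p ^ 2 := by nlinarith
    have hs : 0 < Real.sqrt (1 - p ^ 2) := Real.sqrt_pos.2 hp
    have hss : Real.sqrt (1 - p ^ 2) ^ 2 = 1 - p ^ 2 := Real.sq_sqrt hp.le
    have n1 : HasDerivAt (fun p : ℝ => l - 2*p + p^3) (-2 + 3*p^2) p := by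
      have := (((hasDerivAt_id p).const_mul 2).const_sub l).add (hasDerivAt_pow 3 p)
      refine this.congr_deriv ?_
      norm_num
    have a := n1.div ((hasDerivAt_sq1 h1 h2).pow 3) (pow_pos hs 3).ne'
    refine a.congr_deriv ?_
    simp only [Pi.pow_apply]
    norm_num
    field_simp
    rw [hss]; ring
  refine AntitoneOn.concaveOn_of_deriv (convex_Icc 0 b) ?_ ?_ ?_
  · intro p hp
    exact (hD p (by linarith [hp.1]) (by linarith [hp.2])).continuousAt.continuousWithinAt
  · intro p hp; rw [interior_Icc] at hp
    exact (hD p (by linarith [hp.1]) (by linarith [hp.2])).differentiableAt.differentiableWithinAt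
  · rw [interior_Icc]
    have : AntitoneOn (fun p => (l - 2*p + p^3)/(Real.sqrt (1-p^2))^3) (Ioo 0 b) := by
      refine antitoneOn_of_deriv_nonpos (convex_Ioo 0 b) ?_ ?_ ?_
      · intro p hp
        exact (hD2 p (by linarith [hp.1]) (by linarith [hp.2])).continuousAt.continuousWithinAt
      · intro p hp; rw [interior_Ioo] at hp
        exact (hD2 p (by linarith [hp.1]) (by linarith [hp.2])).differentiableAt.differentiableWithinAt
      · intro p hp; rw [interior_Ioo] at hp
        rw [(hD2 p (by linarith [hp.1]) (by linarith [hp.2])).deriv]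
        apply div_nonpos_of_nonpos_of_nonneg _ (by positivity)
        nlinarith [hp.1, hp.2]
    exact this.congr (fun p hp => ((hD p (by linarith [hp.1]) (by linarith [hp.2])).deriv).symm)

lemma PP_case3 {l c q : ℝ} (hq0 : 0 ≤ q) (hqc : q ≤ c) (hlc : c < l) (hl : l < 1) :
    0 < PP l c q := by
  have hcv := psi_concave (l := l) (b := c) (by linarith) hl (by linarith)
  by_cases h : psi l c ≤ psi l q
  · refine lt_of_lt_of_le ?_ (PP_anti l c hq0 hqc (by linarith) ?_)
    · rw [PP_diag (by linarith) (by linarith)]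
      have : 0 < l - c := by linarith
      positivity
    · intro p h1 h2
      have := hcv.min_le_of_mem_Icc (x := q) (y := c) (z := p) ⟨hq0, hqc⟩ ⟨by linarith, le_rfl⟩ ⟨h1.le, h2.le⟩
      rwa [min_eq_right h] at this
  · push Not at h
    refine lt_of_lt_of_le (PP_zero (by linarith) hlc hl) (PP_mono l c le_rfl hq0 (by linarith) ?_)
    intro p h1 h2
    by_contra h3
    push Not at h3
    have := hcv.min_le_of_mem_Icc (x := p) (y := c) (z := q) ⟨h1.le, by linarith⟩ ⟨by linarith, le_rfl⟩ ⟨h2.le, hqc⟩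
    rw [min_eq_right h3.le] at this
    linarith

lemma PP_main {l c q : ℝ} (hl0 : 0 ≤ l) (hl : l < 1) (hc0 : 0 ≤ c) (hc : c < 1) (hq0 : 0 ≤ q) (hq : q < 1)
    (h : ¬ (c = l ∧ q = l)) : 0 < PP l c q := by
  rcases le_or_gt l c with h1 | h1
  · by_cases h2 : q = c
    · subst h2
      rw [PP_diag hc0 hc]
      have : l - q ≠ 0 := fun h3 => h ⟨by linarith, by linarith⟩
      positivity
    · exact PP_case1 hl0 h1 hc hq0 hq h2
  · rcases le_total c q with h2 | h2
    · exact PP_case2 hc0 h1 hl h2 hq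
    · exact PP_case3 hq0 h2 h1 hl

/-- extension of `W` to the closed slab -/
def Wt (d : ℕ) (l : ℝ) (x : Euc d) : ℝ :=
  (1/2) * (‖x‖^2 - 2*l*x 1 + l^2)
    - (1/2) * ((‖x‖-1)^2 - (1 - 1/‖x‖)^2 * (x 0)^2 + (x 0/‖x‖)^2)
    - l * Real.log (1 + Real.sqrt (1 - (x 0)^2)) + l * Real.log (1 + Real.sqrt (1 - (x 0/‖x‖)^2))
    + l * Real.sqrt (1 - (x 0)^2) - l * Real.sqrt (1 - (x 0/‖x‖)^2) + (l - 1) * Real.log ‖x‖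

lemma nsq (d : ℕ) (x : Euc d) : ‖x‖^2 = x 0 ^ 2 + (x 1 ^ 2 + ∑ j : Fin d, x j.succ.succ ^ 2) := by
  rw [EuclideanSpace.real_norm_sq_eq, Fin.sum_univ_succ, Fin.sum_univ_succ]
  rfl

lemma e_zero (d : ℕ) : (e d 0) 0 = 1 := by simp [e]
lemma e_one (d : ℕ) : (e d 1) 1 = 1 := by simp [e]
lemma e_zero_one (d : ℕ) : (e d 0) 1 = 0 := by simp [e]
lemma e_one_zero (d : ℕ) : (e d 1) 0 = 0 := by simp [e]
lemma e_zero_ss (d : ℕ) (j : Fin d) : (e d 0) j.succ.succ = 0 := by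
  simp [e]
lemma e_one_ss (d : ℕ) (j : Fin d) : (e d 1) j.succ.succ = 0 := by
  have : j.succ.succ ≠ (1 : Fin (d+2)) := by
    intro h
    have := congrArg Fin.val h
    simp at this
  simp [e, this]

lemma DR_zero (d : ℕ) (l : ℝ) (x : Euc d) : (DR d l x) 0 = x 0 / ‖x‖ := by
  have : ∑ j ∈ Finset.univ.filter (fun j : Fin (d + 2) => 2 ≤ (j : ℕ)),
      ((1 - 1 / ‖x‖) * x j) * (e d j) 0 = 0 := by
    apply Finset.sum_eq_zero
    intro j hj
    simp only [Finset.mem_filter, Finset.mem_univ, true_and] at hj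
    have : (0 : Fin (d+2)) ≠ j := by rintro rfl; simp at hj
    simp [e, this]
  simp only [DR, PiLp.add_apply, PiLp.smul_apply, e_zero, e_one_zero, WithLp.ofLp_sum, Finset.sum_apply, smul_eq_mul, this]
  ring

lemma DR_one (d : ℕ) (l : ℝ) (x : Euc d) : (DR d l x) 1 = (1 - 1/‖x‖) * x 1 + l := by
  have : ∑ j ∈ Finset.univ.filter (fun j : Fin (d + 2) => 2 ≤ (j : ℕ)),
      ((1 - 1 / ‖x‖) * x j) * (e d j) 1 = 0 := by
    apply Finset.sum_eq_zero
    intro j hj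
    simp only [Finset.mem_filter, Finset.mem_univ, true_and] at hj
    have : (1 : Fin (d+2)) ≠ j := by rintro rfl; simp at hj
    simp [e, this]
  simp only [DR, PiLp.add_apply, PiLp.smul_apply, e_zero_one, e_one, WithLp.ofLp_sum, Finset.sum_apply, smul_eq_mul, this]
  ring

lemma DR_ss (d : ℕ) (l : ℝ) (x : Euc d) (j : Fin d) :
    (DR d l x) j.succ.succ = (1 - 1/‖x‖) * x j.succ.succ := by
  have : ∑ i ∈ Finset.univ.filter (fun j : Fin (d + 2) => 2 ≤ (j : ℕ)),
      ((1 - 1 / ‖x‖) * x i) * (e d i) j.succ.succ = (1 - 1/‖x‖) * x j.succ.succ := by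
    rw [Finset.sum_eq_single j.succ.succ]
    · simp [e]
    · intro i _ hi
      simp [e, hi.symm]
    · intro h; simp at h
  simp only [DR, PiLp.add_apply, PiLp.smul_apply, e_zero_ss, e_one_ss, WithLp.ofLp_sum, Finset.sum_apply, smul_eq_mul, this]
  ring

lemma x_le_norm (d : ℕ) (x : Euc d) : x 0 ^ 2 + x 1 ^ 2 ≤ ‖x‖^2 := by
  rw [nsq]
  have : 0 ≤ ∑ j : Fin d, x j.succ.succ ^ 2 := Finset.sum_nonneg (fun _ _ => sq_nonneg _)
  linarith

lemma W_eq (d : ℕ) (l : ℝ) {x : Euc d} (hx : 0 < x 0) : W d l x = Wt d l x := by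
  have hn : 0 < ‖x‖ := by
    rw [norm_pos_iff]; rintro rfl; simp at hx
  have a1 : ‖x - l • e d 1‖^2 = ‖x‖^2 - 2*l*x 1 + l^2 := by
    rw [nsq, nsq]
    simp only [PiLp.sub_apply, PiLp.smul_apply, e_one_zero, e_one, e_one_ss, smul_eq_mul, mul_zero, sub_zero]
    ring
  have a2 : ‖DR d l x - l • e d 1‖^2 = (‖x‖-1)^2 - (1 - 1/‖x‖)^2 * (x 0)^2 + (x 0/‖x‖)^2 := by
    rw [nsq]
    simp only [PiLp.sub_apply, PiLp.smul_apply, e_one_zero, e_one, e_one_ss, smul_eq_mul, mul_zero, sub_zero,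
      DR_zero, DR_one, DR_ss, mul_pow, ← Finset.mul_sum]
    have h := nsq d x
    have : (‖x‖ - 1)^2 = (1 - 1/‖x‖)^2 * ‖x‖^2 := by field_simp
    rw [this]
    linear_combination (-(1 - 1/‖x‖)^2) * h
  unfold W F Wt
  rw [a1, a2, DR_zero, Real.log_div hx.ne' hn.ne']
  ring

lemma Wt_cont (d : ℕ) (l : ℝ) {x : Euc d} (hx : x ≠ 0) : ContinuousAt (Wt d l) x := by
  have hn : ‖x‖ ≠ 0 := norm_ne_zero_iff.2 hx
  have p : ∀ y : ℝ, 1 + Real.sqrt y ≠ 0 := fun y => by positivity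
  unfold Wt
  have c0 : ContinuousAt (fun x : Euc d => x 0) x := by fun_prop
  have c1 : ContinuousAt (fun x : Euc d => x 1) x := by fun_prop
  fun_prop (disch := first | exact hn | exact p _)

lemma lg_bound {q : ℝ} (h0 : 0 ≤ q) (h1 : q ≤ 1) : 0 ≤ q - Real.log (1+q) ∧ q - Real.log (1+q) ≤ 1 := by
  have := Real.log_le_sub_one_of_pos (x := 1+q) (by linarith)
  have := Real.log_nonneg (x := 1+q) (by linarith)
  constructor <;> linarith

lemma sqrt_le1 (y : ℝ) : Real.sqrt (1 - y^2) ≤ 1 := by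
  rw [Real.sqrt_le_iff]; constructor <;> nlinarith [sq_nonneg y]

lemma Wt_coer (d : ℕ) {l : ℝ} (h0 : 0 ≤ l) (h1 : l < 1) {x : Euc d} (hx : x ≠ 0) :
    (1-l) * (‖x‖ - Real.log ‖x‖) - 2 ≤ Wt d l x := by
  have hn : 0 < ‖x‖ := norm_pos_iff.2 hx
  have hle := x_le_norm d x
  have a := lg_bound (Real.sqrt_nonneg (1 - (x 0)^2)) (sqrt_le1 _)
  have b := lg_bound (Real.sqrt_nonneg (1 - (x 0/‖x‖)^2)) (sqrt_le1 _)
  have h3 : (x 0/‖x‖)^2 ≤ 1 := by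
    rw [div_pow, div_le_one (by positivity)]; nlinarith
  have h4 : x 1 ≤ ‖x‖ := by nlinarith [sq_nonneg (x 0)]
  have h5 : 0 ≤ (1 - 1/‖x‖)^2 * (x 0)^2 := by positivity
  have h6 := mul_nonneg h0 a.1
  have h7 := mul_nonneg h0 b.1
  have h8 := mul_nonneg h0 (sub_nonneg.2 b.2)
  have h9 := mul_nonneg h0 (sub_nonneg.2 h4)
  unfold Wt
  nlinarith [sq_nonneg l]

lemma Wt_bdry (d : ℕ) {l : ℝ} (h0 : 0 ≤ l) (h1 : l < 1) {x : Euc d} (hx : x ≠ 0) (hx0 : x 0 = 0) :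
    0 < Wt d l x := by
  have hn : 0 < ‖x‖ := norm_pos_iff.2 hx
  have hle := x_le_norm d x
  have h4 : x 1 ≤ ‖x‖ := by nlinarith [sq_nonneg (x 0)]
  have h9 := mul_nonneg h0 (sub_nonneg.2 h4)
  have h5 := Real.log_le_sub_one_of_pos hn
  have h6 := mul_nonneg (sub_nonneg.2 h1.le) (sub_nonneg.2 h5)
  unfold Wt
  rw [hx0]
  simp
  nlinarith [sq_nonneg (1 - l), mul_pos (sub_pos.2 h1) (sub_pos.2 h1)]

lemma xStar_zero (d : ℕ) (l : ℝ) : (xStar d l) 0 = Real.sqrt (1 - l^2) := by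
  simp [xStar, e_zero, e_one_zero]
lemma xStar_one (d : ℕ) (l : ℝ) : (xStar d l) 1 = l := by
  simp [xStar, e_zero_one, e_one]
lemma xStar_ss (d : ℕ) (l : ℝ) (j : Fin d) : (xStar d l) j.succ.succ = 0 := by
  simp [xStar, e_zero_ss, e_one_ss]

lemma Wt_PP (d : ℕ) (l : ℝ) {x : Euc d} (hx0 : 0 < x 0) (hx1 : x 0 ≤ 1) :
    Wt d l x = PP l (Real.sqrt (1 - (x 0/‖x‖)^2)) (Real.sqrt (1 - (x 0)^2))
      + l * (‖x‖ * Real.sqrt (1 - (x 0/‖x‖)^2) - x 1) := by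
  have hn : 0 < ‖x‖ := by
    rw [norm_pos_iff]; rintro rfl; simp at hx0
  have hle := x_le_norm d x
  have hs : 0 < x 0 / ‖x‖ := by positivity
  have h3 : (x 0/‖x‖)^2 ≤ 1 := by
    rw [div_pow, div_le_one (by positivity)]; nlinarith
  have q1 : Real.sqrt (1 - (x 0)^2)^2 = 1 - (x 0)^2 := Real.sq_sqrt (by nlinarith)
  have q2 : Real.sqrt (1 - (x 0/‖x‖)^2)^2 = 1 - (x 0/‖x‖)^2 := Real.sq_sqrt (by nlinarith)
  unfold PP psi Wt
  rw [q1, q2]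
  simp only [sub_sub_cancel, Real.sqrt_sq hx0.le, Real.sqrt_sq hs.le, Real.log_pow,
    Real.log_div hx0.ne' hn.ne']
  set c := Real.sqrt (1 - (x 0/‖x‖)^2)
  have t : x 0 * (c * (l - c) / (x 0/‖x‖)) = ‖x‖ * c * l - ‖x‖ * (1 - (x 0/‖x‖)^2) := by
    rw [← q2]; field_simp
  rw [t]
  have t2 : (‖x‖-1)^2 - (1 - 1/‖x‖)^2 * (x 0)^2 = (‖x‖-1)^2 * (1 - (x 0/‖x‖)^2) := by
    field_simp
  rw [t2]
  have t3 : x 0 ^ 2 = ‖x‖^2 * (x 0/‖x‖)^2 := by field_simp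
  push_cast
  linear_combination (-1/2)*t3

lemma Wt_pos (d : ℕ) {l : ℝ} (h0 : 0 ≤ l) (h1 : l < 1) {x : Euc d} (hx : x ≠ 0) (hx0 : 0 ≤ x 0)
    (hx1 : x 0 ≤ 1) (hne : x ≠ xStar d l) : 0 < Wt d l x := by
  rcases hx0.eq_or_lt with hx0 | hx0
  · exact Wt_bdry d h0 h1 hx hx0.symm
  have hn : 0 < ‖x‖ := norm_pos_iff.2 hx
  have hle := x_le_norm d x
  have hs : 0 < x 0 / ‖x‖ := by positivity
  have h3 : (x 0/‖x‖)^2 ≤ 1 := by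
    rw [div_pow, div_le_one (by positivity)]; nlinarith
  have q2 : Real.sqrt (1 - (x 0/‖x‖)^2)^2 = 1 - (x 0/‖x‖)^2 := Real.sq_sqrt (by nlinarith)
  have q1 : Real.sqrt (1 - (x 0)^2)^2 = 1 - (x 0)^2 := Real.sq_sqrt (by nlinarith)
  rw [Wt_PP d l hx0 hx1]
  have hc0 := Real.sqrt_nonneg (1 - (x 0/‖x‖)^2)
  have hq0 := Real.sqrt_nonneg (1 - (x 0)^2)
  set c := Real.sqrt (1 - (x 0/‖x‖)^2)
  set q := Real.sqrt (1 - (x 0)^2)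
  have hc1 : c < 1 := by nlinarith [pow_pos hs 2]
  have hq1 : q < 1 := by nlinarith [pow_pos hx0 2]
  have hx2 : (‖x‖ * c)^2 = ‖x‖^2 - x 0^2 := by rw [mul_pow, q2]; field_simp
  have hxc : x 1 ≤ ‖x‖ * c := by
    apply le_of_abs_le
    apply abs_le_of_sq_le_sq _ (by positivity)
    nlinarith
  have hlx := mul_nonneg h0 (sub_nonneg.2 hxc)
  by_cases h : c = l ∧ q = l
  · obtain ⟨hcl, hql⟩ := h
    have hP : PP l c q = 0 := by
      rw [hcl, hql, PP_diag h0 h1]; simp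
    rw [hP, zero_add]
    have hxx : x 0 = x 0 / ‖x‖ := by
      have : (x 0)^2 = (x 0 / ‖x‖)^2 := by rw [hcl] at q2; rw [hql] at q1; linarith
      exact (pow_left_inj₀ hx0.le hs.le two_ne_zero).1 this
    have hn1 : ‖x‖ = 1 := by
      field_simp at hxx; exact hxx
    have hx0' : x 0 = Real.sqrt (1 - l^2) := by
      rw [← hql, q1, sub_sub_cancel, Real.sqrt_sq hx0.le]
    rw [hn1, one_mul] at hlx hxc ⊢
    rcases hlx.eq_or_lt with hz | hz
    · exfalso
      apply hne
      have hx1l : x 1 = l := by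
        rcases mul_eq_zero.1 hz.symm with hl | hl
        · have : x 1 ^ 2 ≤ 0 := by
            rw [hx0', hn1, hl] at hle; simp at hle; simp [hle]
          rw [hl]; nlinarith
        · linarith
      have hsum := nsq d x
      have hz2 : ∑ j : Fin d, x j.succ.succ ^ 2 = 0 := by
        rw [hn1, hx1l] at hsum
        rw [hql] at q1; linarith
      have hz3 := (Finset.sum_eq_zero_iff_of_nonneg (fun _ _ => sq_nonneg _)).1 hz2
      ext j
      refine Fin.cases ?_ (fun j => Fin.cases ?_ (fun j => ?_) j) j
      · rw [hx0', xStar_zero]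
      · exact hx1l.trans (xStar_one d l).symm
      · rw [xStar_ss]
        exact pow_eq_zero_iff two_ne_zero |>.1 (hz3 j (Finset.mem_univ _))
    · exact hz
  · have := PP_main h0 h1 hc0 hc1 hq0 hq1 h
    linarith

lemma Wt_star (d : ℕ) {l : ℝ} (h0 : 0 ≤ l) (h1 : l < 1) : Wt d l (xStar d l) = 0 := by
  have hp : 0 < 1 - l^2 := by nlinarith
  have hs : 0 < Real.sqrt (1 - l^2) := Real.sqrt_pos.2 hp
  have hn : ‖xStar d l‖ = 1 := by
    have := nsq d (xStar d l)
    simp only [xStar_zero, xStar_one, xStar_ss, Real.sq_sqrt hp.le] at this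
    simp at this
    rcases this with h | h
    · exact h
    · linarith [norm_nonneg (xStar d l)]
  have hle : Real.sqrt (1 - l^2) ≤ 1 := sqrt_le1 l
  rw [Wt_PP d l (by rw [xStar_zero]; exact hs) (by rw [xStar_zero]; exact hle)]
  rw [hn, xStar_zero, xStar_one, div_one, Real.sq_sqrt hp.le, sub_sub_cancel, Real.sqrt_sq h0,
    PP_diag h0 h1]
  ring

lemma norm_bounds (d : ℕ) {l : ℝ} (h0 : 0 ≤ l) (h1 : l < 1) (M : ℝ) :
    ∃ m R : ℝ, 0 < m ∧ ∀ x : Euc d, x ≠ 0 → Wt d l x ≤ M → m ≤ ‖x‖ ∧ ‖x‖ ≤ R := by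
  refine ⟨Real.exp (-((M+2)/(1-l))), 2*((M+2)/(1-l)), Real.exp_pos _, ?_⟩
  intro x hx hM
  have hn : 0 < ‖x‖ := norm_pos_iff.2 hx
  have hc := Wt_coer d h0 h1 hx
  have hB : ‖x‖ - Real.log ‖x‖ ≤ (M+2)/(1-l) := by
    rw [le_div_iff₀ (by linarith)]; linarith
  constructor
  · rw [← Real.le_log_iff_exp_le hn]; linarith
  · have a := Real.log_le_sub_one_of_pos (x := ‖x‖/2) (by linarith)
    rw [Real.log_div hn.ne' (by norm_num)] at a
    have b := Real.log_le_sub_one_of_pos (x := 2) (by norm_num)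
    linarith

lemma sub_compact (d : ℕ) {l : ℝ} (h0 : 0 ≤ l) (h1 : l < 1) (M : ℝ) :
    IsCompact {x : Euc d | x ≠ 0 ∧ 0 ≤ x 0 ∧ x 0 ≤ 1 ∧ Wt d l x ≤ M} := by
  obtain ⟨m, R, hm, H⟩ := norm_bounds d h0 h1 M
  have hS : IsClosed {x : Euc d | m ≤ ‖x‖ ∧ ‖x‖ ≤ R ∧ 0 ≤ x 0 ∧ x 0 ≤ 1} := by
    have c0 : Continuous (fun x : Euc d => x 0) := by fun_prop
    exact (isClosed_le continuous_const continuous_norm).inter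
      ((isClosed_le continuous_norm continuous_const).inter
      ((isClosed_le continuous_const c0).inter (isClosed_le c0 continuous_const)))
  have hc : ContinuousOn (Wt d l) {x : Euc d | m ≤ ‖x‖ ∧ ‖x‖ ≤ R ∧ 0 ≤ x 0 ∧ x 0 ≤ 1} := by
    intro x hx
    apply (Wt_cont d l _).continuousWithinAt
    exact norm_pos_iff.1 (hm.trans_le hx.1)
  have hcl := hc.preimage_isClosed_of_isClosed hS (isClosed_Iic (a := M))
  have heq : {x : Euc d | x ≠ 0 ∧ 0 ≤ x 0 ∧ x 0 ≤ 1 ∧ Wt d l x ≤ M} =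
      {x : Euc d | m ≤ ‖x‖ ∧ ‖x‖ ≤ R ∧ 0 ≤ x 0 ∧ x 0 ≤ 1} ∩ Wt d l ⁻¹' Iic M := by
    ext x
    constructor
    · rintro ⟨a, b, c, f⟩
      have := H x a f
      exact ⟨⟨this.1, this.2, b, c⟩, f⟩
    · rintro ⟨⟨a, b, c, f⟩, k⟩
      exact ⟨norm_pos_iff.1 (hm.trans_le a), c, f, k⟩
  rw [heq]
  apply (isCompact_closedBall (0 : Euc d) R).of_isClosed_subset hcl
  rintro x ⟨⟨_, b, _, _⟩, _⟩
  simpa using b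

lemma Dsq (d : ℕ) (l : ℝ) (x : Euc d) : ‖x - xStar d l‖^2 =
    (x 0 - Real.sqrt (1 - l^2))^2 + ((x 1 - l)^2 + ∑ j : Fin d, x j.succ.succ ^ 2) := by
  rw [nsq]
  simp only [PiLp.sub_apply, xStar_zero, xStar_one, xStar_ss, sub_zero]

lemma Usq (d : ℕ) (l : ℝ) (x : Euc d) : ‖x - l • e d 1‖^2 =
    (x 0)^2 + ((x 1 - l)^2 + ∑ j : Fin d, x j.succ.succ ^ 2) := by
  rw [nsq]
  simp only [PiLp.sub_apply, PiLp.smul_apply, e_one_zero, e_one, e_one_ss, smul_eq_mul, mul_zero,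
    mul_one, sub_zero]

lemma exists_sign (y : ℝ) : ∃ s : ℝ, s^2 = 1 ∧ 0 ≤ s * y := by
  rcases le_total 0 y with h | h
  · exact ⟨1, by norm_num, by simpa using h⟩
  · exact ⟨-1, by norm_num, by linarith⟩

lemma pert1 (d : ℕ) (l : ℝ) {x : Euc d} (hx : x ∈ Delta d) :
    ∃ γ : ℝ → Euc d, Continuous γ ∧ γ 0 = x ∧ ∀ η > 0, γ η ∈ Delta d ∧
      ‖x - xStar d l‖ < ‖γ η - xStar d l‖ ∧ U d l x < U d l (γ η) := by
  obtain ⟨s, hs, hsy⟩ := exists_sign (x 1 - l)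
  refine ⟨fun η => x + (η * s) • e d 1, by fun_prop, by simp, ?_⟩
  intro η hη
  have z0 : (x + (η * s) • e d 1) 0 = x 0 := by simp [e_one_zero]
  have z1 : (x + (η * s) • e d 1) 1 = x 1 + η * s := by simp [e_one]
  have zs : ∀ j : Fin d, (x + (η * s) • e d 1) j.succ.succ = x j.succ.succ := by
    intro j; simp only [PiLp.add_apply, PiLp.smul_apply, e_one_ss]; simp
  have key : (x 1 - l)^2 < (x 1 + η * s - l)^2 := by
    have := mul_nonneg hη.le hsy
    nlinarith [pow_pos hη 2]
  refine ⟨?_, ?_, ?_⟩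
  · unfold Delta at *
    simp only [mem_ofPred_eq] at *
    rw [z0]; exact hx
  · apply lt_of_pow_lt_pow_left₀ 2 (norm_nonneg _)
    rw [Dsq, Dsq]
    simp only [z0, z1, zs]
    linarith
  · unfold U F
    simp only [Usq]
    simp only [z0, z1, zs]
    linarith

lemma pert2 (d : ℕ) (l : ℝ) {x : Euc d} (h0 : 0 ≤ x 0) (h1 : x 0 ≤ 1) :
    ∃ γ : ℝ → Euc d, Continuous γ ∧ γ 0 = x ∧ ∀ η > 0, η ≤ 1 → γ η ∈ Delta d ∧
      ‖x - xStar d l‖ ≤ ‖γ η - xStar d l‖ := by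
  rcases h0.eq_or_lt with h0 | h0
  · obtain ⟨s, hs, hsy⟩ := exists_sign (x 1 - l)
    refine ⟨fun η => x + (η^2) • e d 0 + (2 * η * s) • e d 1, by fun_prop, by simp, ?_⟩
    intro η hη hη1
    have z0 : (x + (η^2) • e d 0 + (2 * η * s) • e d 1) 0 = η^2 := by
      simp [e_one_zero, e_zero, ← h0]
    have z1 : (x + (η^2) • e d 0 + (2 * η * s) • e d 1) 1 = x 1 + 2 * η * s := by
      simp [e_one, e_zero_one]
    have zs : ∀ j : Fin d, (x + (η^2) • e d 0 + (2 * η * s) • e d 1) j.succ.succ = x j.succ.succ := by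
      intro j; simp only [PiLp.add_apply, PiLp.smul_apply, e_one_ss, e_zero_ss]; simp
    refine ⟨?_, ?_⟩
    · unfold Delta
      simp only [mem_ofPred_eq]
      rw [z0]; constructor
      · positivity
      · nlinarith
    · apply le_of_sq_le_sq _ (norm_nonneg _)
      rw [Dsq, Dsq]
      simp only [z0, z1, zs, ← h0]
      have := mul_nonneg hη.le hsy
      have h2 := sqrt_le1 l
      have h3 := mul_nonneg (sq_nonneg η) (sub_nonneg.2 h2)
      have h4 : (2*η*s)^2 = 4 * η^2 := by rw [mul_pow, hs]; ring
      nlinarith [sq_nonneg (η^2), sq_nonneg η]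
  · obtain ⟨γ, a, b, c⟩ := pert1 d l (x := x) ⟨h0, h1⟩
    exact ⟨γ, a, b, fun η hη _ => ⟨(c η hη).1, (c η hη).2.1.le⟩⟩

lemma ne_zero_of_pos {d : ℕ} {x : Euc d} (hx : 0 < x 0) : x ≠ 0 := by
  rintro rfl; simp at hx

lemma r_pos {l : ℝ} (h0 : 0 ≤ l) (h1 : l < 1) : 0 < Real.sqrt (1 - l^2) :=
  Real.sqrt_pos.2 (by nlinarith)

lemma xStar_mem (d : ℕ) {l : ℝ} (h0 : 0 ≤ l) (h1 : l < 1) : xStar d l ∈ Delta d := by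
  unfold Delta
  simp only [mem_ofPred_eq]
  rw [xStar_zero]
  exact ⟨r_pos h0 h1, sqrt_le1 l⟩

lemma W_nonneg (d : ℕ) {l : ℝ} (h0 : 0 ≤ l) (h1 : l < 1) {x : Euc d} (hx : x ∈ Delta d) :
    0 ≤ W d l x := by
  rw [W_eq d l hx.1]
  by_cases h : x = xStar d l
  · rw [h, Wt_star d h0 h1]
  · exact (Wt_pos d h0 h1 (ne_zero_of_pos hx.1) hx.1.le hx.2 h).le

lemma g_bdd (d : ℕ) {l : ℝ} (h0 : 0 ≤ l) (h1 : l < 1) (t : ℝ) :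
    BddBelow {w : ℝ | ∃ x : Euc d, x ∈ Delta d ∧ t ≤ ‖x - xStar d l‖ ∧ w = W d l x} := by
  refine ⟨0, ?_⟩
  rintro w ⟨x, hx, _, rfl⟩
  exact W_nonneg d h0 h1 hx

lemma g_ne (d : ℕ) {l : ℝ} (h0 : 0 ≤ l) (h1 : l < 1) (t : ℝ) :
    {w : ℝ | ∃ x : Euc d, x ∈ Delta d ∧ t ≤ ‖x - xStar d l‖ ∧ w = W d l x}.Nonempty := by
  have z0 : (xStar d l + |t| • e d 1) 0 = Real.sqrt (1 - l^2) := by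
    simp only [PiLp.add_apply, PiLp.smul_apply, xStar_zero, e_one_zero]; simp
  refine ⟨_, xStar d l + |t| • e d 1, ?_, ?_, rfl⟩
  · have := xStar_mem d h0 h1
    unfold Delta at *
    simp only [mem_ofPred_eq] at *
    rw [z0, ← xStar_zero d l]; exact this
  · have : ‖e d 1‖ = 1 := by simp [e]
    rw [add_sub_cancel_left, norm_smul, this]
    simp [le_abs_self]

lemma g_le (d : ℕ) {l : ℝ} (h0 : 0 ≤ l) (h1 : l < 1) {t : ℝ} {x : Euc d} (hx : x ∈ Delta d)
    (ht : t ≤ ‖x - xStar d l‖) : g d l t ≤ Wt d l x := by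
  rw [← W_eq d l hx.1]
  exact csInf_le (g_bdd d h0 h1 t) ⟨x, hx, ht, rfl⟩

lemma le_g (d : ℕ) {l : ℝ} (h0 : 0 ≤ l) (h1 : l < 1) {t b : ℝ}
    (H : ∀ x : Euc d, x ∈ Delta d → t ≤ ‖x - xStar d l‖ → b ≤ Wt d l x) : b ≤ g d l t := by
  apply le_csInf (g_ne d h0 h1 t)
  rintro w ⟨x, hx, ht, rfl⟩
  rw [W_eq d l hx.1]
  exact H x hx ht

lemma g_lt (d : ℕ) {l : ℝ} (h0 : 0 ≤ l) (h1 : l < 1) {t a : ℝ} (h : g d l t < a) :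
    ∃ x : Euc d, x ∈ Delta d ∧ t ≤ ‖x - xStar d l‖ ∧ Wt d l x < a := by
  obtain ⟨w, ⟨x, hx, ht, rfl⟩, hw⟩ := exists_lt_of_csInf_lt (g_ne d h0 h1 t) h
  exact ⟨x, hx, ht, by rwa [← W_eq d l hx.1]⟩

lemma g_le' (d : ℕ) {l : ℝ} (h0 : 0 ≤ l) (h1 : l < 1) {t : ℝ} {x : Euc d} (hx : x ≠ 0)
    (hx0 : 0 ≤ x 0) (hx1 : x 0 ≤ 1)
    (ht : t ≤ ‖x - xStar d l‖) : g d l t ≤ Wt d l x := by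
  obtain ⟨γ, hγ, hγ0, H⟩ := pert2 d l hx0 hx1
  have hc : Tendsto (fun η => Wt d l (γ η)) (nhdsWithin 0 (Ioi 0)) (nhds (Wt d l x)) := by
    have h2 : ContinuousAt (fun η => Wt d l (γ η)) 0 := by
      apply ContinuousAt.comp (g := Wt d l) (f := γ)
      · rw [hγ0]; exact Wt_cont d l hx
      · exact hγ.continuousAt
    have := h2.tendsto.mono_left (nhdsWithin_le_nhds (s := Ioi 0))
    rwa [hγ0] at this
  apply ge_of_tendsto hc
  filter_upwards [Ioc_mem_nhdsGT (zero_lt_one' ℝ)] with η hη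
  exact g_le d h0 h1 (H η hη.1 hη.2).1 (ht.trans (H η hη.1 hη.2).2)

lemma g_mono (d : ℕ) {l : ℝ} (h0 : 0 ≤ l) (h1 : l < 1) : Monotone (g d l) := by
  intro s t hst
  apply le_g d h0 h1
  intro x hx ht
  exact g_le d h0 h1 hx (hst.trans ht)

lemma g_nonneg (d : ℕ) {l : ℝ} (h0 : 0 ≤ l) (h1 : l < 1) (t : ℝ) : 0 ≤ g d l t := by
  apply le_g d h0 h1
  intro x hx _
  rw [← W_eq d l hx.1]; exact W_nonneg d h0 h1 hx

lemma g_zero (d : ℕ) {l : ℝ} (h0 : 0 ≤ l) (h1 : l < 1) : g d l 0 = 0 := by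
  apply le_antisymm _ (g_nonneg d h0 h1 0)
  have := g_le d h0 h1 (t := 0) (xStar_mem d h0 h1) (by simp)
  rwa [Wt_star d h0 h1] at this

lemma Dcont (d : ℕ) (l : ℝ) : Continuous (fun x : Euc d => ‖x - xStar d l‖) := by fun_prop

lemma g_pos (d : ℕ) {l : ℝ} (h0 : 0 ≤ l) (h1 : l < 1) {t : ℝ} (ht : 0 < t) : 0 < g d l t := by
  have hC := (sub_compact d h0 h1 1).inter_right
    (isClosed_le (continuous_const (y := t)) (Dcont d l))
  rcases Set.eq_empty_or_nonempty ({x : Euc d | x ≠ 0 ∧ 0 ≤ x 0 ∧ x 0 ≤ 1 ∧ Wt d l x ≤ 1} ∩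
    {x : Euc d | t ≤ ‖x - xStar d l‖}) with he | hne
  · apply lt_of_lt_of_le zero_lt_one
    apply le_g d h0 h1
    intro x hx hxt
    by_contra hlt
    have : x ∈ (∅ : Set (Euc d)) := by
      rw [← he]; exact ⟨⟨ne_zero_of_pos hx.1, hx.1.le, hx.2, (not_le.1 hlt).le⟩, hxt⟩
    exact this
  · obtain ⟨z, hz, hmin⟩ := hC.exists_isMinOn hne (f := Wt d l)
      (fun x hx => (Wt_cont d l hx.1.1).continuousWithinAt)
    have hzp : 0 < Wt d l z := by
      apply Wt_pos d h0 h1 hz.1.1 hz.1.2.1 hz.1.2.2.1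
      rintro rfl
      have := hz.2
      simp at this; linarith
    apply lt_of_lt_of_le (lt_min zero_lt_one hzp)
    apply le_g d h0 h1
    intro x hx hxt
    by_cases hlt : Wt d l x ≤ 1
    · exact (min_le_right _ _).trans
        (hmin ⟨⟨ne_zero_of_pos hx.1, hx.1.le, hx.2, hlt⟩, hxt⟩)
    · exact (min_le_left _ _).trans (not_le.1 hlt).le

lemma g_cont (d : ℕ) {l : ℝ} (h0 : 0 ≤ l) (h1 : l < 1) : Continuous (g d l) := by
  rw [continuous_iff_continuousAt]
  intro t
  apply tendsto_order.2 ⟨?_, ?_⟩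
  · intro a ha
    obtain ⟨b, hab, hb⟩ := exists_between ha
    have hC := sub_compact d h0 h1 b
    rcases Set.eq_empty_or_nonempty {x : Euc d | x ≠ 0 ∧ 0 ≤ x 0 ∧ x 0 ≤ 1 ∧ Wt d l x ≤ b} with he | hne
    · apply Eventually.of_forall
      intro s
      apply hab.trans_le
      apply le_g d h0 h1
      intro x hx hxt
      by_contra hlt
      have : x ∈ (∅ : Set (Euc d)) := by
        rw [← he]; exact ⟨ne_zero_of_pos hx.1, hx.1.le, hx.2, (not_le.1 hlt).le⟩
      exact this
    · obtain ⟨z, hz, hmax⟩ := hC.exists_isMaxOn hne (Dcont d l).continuousOn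
      have hzt : ‖z - xStar d l‖ < t := by
        by_contra hlt
        have := g_le' d h0 h1 hz.1 hz.2.1 hz.2.2.1 (not_lt.1 hlt)
        linarith [hz.2.2.2]
      filter_upwards [lt_mem_nhds hzt] with s hs
      apply hab.trans_le
      apply le_g d h0 h1
      intro x hx hxt
      by_contra hlt
      have : ‖x - xStar d l‖ ≤ ‖z - xStar d l‖ :=
        hmax (show x ∈ _ from ⟨ne_zero_of_pos hx.1, hx.1.le, hx.2, (not_le.1 hlt).le⟩)
      linarith
  · intro a ha
    obtain ⟨x, hx, hxt, hxa⟩ := g_lt d h0 h1 ha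
    obtain ⟨γ, hγ, hγ0, H⟩ := pert1 d l hx
    have h2 : ContinuousAt (fun η => Wt d l (γ η)) 0 := by
      apply ContinuousAt.comp (g := Wt d l) (f := γ)
      · rw [hγ0]; exact Wt_cont d l (ne_zero_of_pos hx.1)
      · exact hγ.continuousAt
    have h3 : ∀ᶠ η in nhdsWithin (0:ℝ) (Ioi 0), Wt d l (γ η) < a := by
      apply nhdsWithin_le_nhds
      apply h2.eventually (gt_mem_nhds _)
      simp only [hγ0]; exact hxa
    obtain ⟨η, hη, hη0⟩ := (h3.and self_mem_nhdsWithin).exists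
    have hh := H η hη0
    filter_upwards [gt_mem_nhds (hxt.trans_lt hh.2.1)] with s hs
    exact (g_le d h0 h1 hh.1 (le_of_lt hs)).trans_lt hη

/-- smallest distance on the superlevel sets of `U` -/
def rho (d : ℕ) (l t : ℝ) : ℝ :=
  sInf ((fun y : Euc d => ‖y - xStar d l‖) '' {y | y ∈ Delta d ∧ t ≤ U d l y})

lemma U_cont (d : ℕ) (l : ℝ) {x : Euc d} (hx : 0 < x 0) : ContinuousAt (U d l) x := by
  have p : ∀ y : ℝ, 1 + Real.sqrt y ≠ 0 := fun y => by positivity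
  have c0 : ContinuousAt (fun x : Euc d => x 0) x := by fun_prop
  unfold U F
  fun_prop (disch := first | exact hx.ne' | exact p _)

lemma U_star (d : ℕ) (l : ℝ) : U d l (xStar d l) = 0 := by simp [U]

lemma rho_bdd (d : ℕ) (l t : ℝ) :
    BddBelow ((fun y : Euc d => ‖y - xStar d l‖) '' {y | y ∈ Delta d ∧ t ≤ U d l y}) := by
  refine ⟨0, ?_⟩
  rintro _ ⟨y, _, rfl⟩
  exact norm_nonneg _

lemma rho_small (d : ℕ) {l : ℝ} (h0 : 0 ≤ l) (h1 : l < 1) (t : ℝ) :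
    ∃ y : Euc d, y ∈ Delta d ∧ t ≤ U d l y ∧ ‖y - xStar d l‖ ≤ Real.sqrt (1 - l^2) := by
  set A := t + F d l (xStar d l) + l * Real.log 2 with hA
  set r := Real.sqrt (1 - l^2)
  have hr : 0 < r := r_pos h0 h1
  have hr1 : r ≤ 1 := sqrt_le1 l
  set η := min r (Real.exp (-(A/(1-l)))) with hη
  have hη0 : 0 < η := lt_min hr (Real.exp_pos _)
  have hηr : η ≤ r := min_le_left _ _
  have hlog : Real.log η ≤ -(A/(1-l)) := by
    rw [Real.log_le_iff_le_exp hη0]; exact min_le_right _ _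
  have hlog2 : A ≤ (l-1) * Real.log η := by
    have := mul_le_mul_of_nonneg_left hlog (sub_nonneg.2 h1.le)
    have h2 : (1-l) * -(A/(1-l)) = -A := by
      have : 1 - l ≠ 0 := by linarith
      field_simp
    rw [h2] at this; linarith
  have z0 : (η • e d 0 + l • e d 1) 0 = η := by simp [e_one_zero, e_zero]
  have z1 : (η • e d 0 + l • e d 1) 1 = l := by simp [e_one, e_zero_one]
  have zs : ∀ j : Fin d, (η • e d 0 + l • e d 1) j.succ.succ = 0 := by
    intro j; simp only [PiLp.add_apply, PiLp.smul_apply, e_one_ss, e_zero_ss]; simp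
  refine ⟨η • e d 0 + l • e d 1, ?_, ?_, ?_⟩
  · unfold Delta
    simp only [mem_ofPred_eq]
    rw [z0]; exact ⟨hη0, hηr.trans hr1⟩
  · unfold U
    rw [show F d l (η • e d 0 + l • e d 1) = _ from rfl]
    unfold F at *
    rw [z0]
    have s1 := sqrt_le1 η
    have s0 := Real.sqrt_nonneg (1 - η^2)
    have hlg : Real.log (1 + Real.sqrt (1 - η^2)) ≤ Real.log 2 :=
      Real.log_le_log (by positivity) (by linarith)
    have := mul_le_mul_of_nonneg_left hlg h0
    have := mul_nonneg h0 s0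
    have := sq_nonneg ‖η • e d 0 + l • e d 1 - l • e d 1‖
    linarith
  · apply le_of_sq_le_sq _ hr.le
    rw [Dsq]
    simp only [z0, z1, zs]
    simp
    change (η - r)^2 ≤ r^2
    nlinarith

lemma rho_ne (d : ℕ) {l : ℝ} (h0 : 0 ≤ l) (h1 : l < 1) (t : ℝ) :
    ((fun y : Euc d => ‖y - xStar d l‖) '' {y | y ∈ Delta d ∧ t ≤ U d l y}).Nonempty := by
  obtain ⟨y, a, b, _⟩ := rho_small d h0 h1 t
  exact ⟨_, y, ⟨a, b⟩, rfl⟩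

lemma rho_le (d : ℕ) {l t : ℝ} {y : Euc d} (hy : y ∈ Delta d) (ht : t ≤ U d l y) :
    rho d l t ≤ ‖y - xStar d l‖ := csInf_le (rho_bdd d l t) ⟨y, ⟨hy, ht⟩, rfl⟩

lemma le_rho (d : ℕ) {l : ℝ} (h0 : 0 ≤ l) (h1 : l < 1) {t b : ℝ}
    (H : ∀ y : Euc d, y ∈ Delta d → t ≤ U d l y → b ≤ ‖y - xStar d l‖) : b ≤ rho d l t := by
  apply le_csInf (rho_ne d h0 h1 t)
  rintro _ ⟨y, ⟨hy, ht⟩, rfl⟩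
  exact H y hy ht

lemma rho_mono (d : ℕ) {l : ℝ} (h0 : 0 ≤ l) (h1 : l < 1) : Monotone (rho d l) := by
  intro s t hst
  exact le_rho d h0 h1 (fun y hy ht => rho_le d hy (hst.trans ht))

lemma rho_nonneg (d : ℕ) {l : ℝ} (h0 : 0 ≤ l) (h1 : l < 1) (t : ℝ) : 0 ≤ rho d l t :=
  le_rho d h0 h1 (fun _ _ _ => norm_nonneg _)

lemma rho_zero (d : ℕ) {l : ℝ} (h0 : 0 ≤ l) (h1 : l < 1) : rho d l 0 = 0 := by
  apply le_antisymm _ (rho_nonneg d h0 h1 0)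
  have := rho_le d (l := l) (t := 0) (xStar_mem d h0 h1) (U_star d l).ge
  simpa using this

lemma rho_pos (d : ℕ) {l : ℝ} (h0 : 0 ≤ l) (h1 : l < 1) {t : ℝ} (ht : 0 < t) : 0 < rho d l t := by
  have hc := U_cont d l (xStar_mem d h0 h1).1
  have : ∀ᶠ y in nhds (xStar d l), U d l y < t := by
    apply hc.eventually (gt_mem_nhds _)
    rw [U_star]; exact ht
  obtain ⟨ε, hε, H⟩ := Metric.eventually_nhds_iff.1 this
  apply hε.trans_le
  apply le_rho d h0 h1
  intro y hy hyt
  by_contra hlt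
  have := H (y := y) (by rw [dist_eq_norm]; exact not_le.1 hlt)
  linarith

lemma rho_cont (d : ℕ) {l : ℝ} (h0 : 0 ≤ l) (h1 : l < 1) : Continuous (rho d l) := by
  rw [continuous_iff_continuousAt]
  intro t
  apply tendsto_order.2 ⟨?_, ?_⟩
  · intro a ha
    obtain ⟨b, hab, hb⟩ := exists_between ha
    have hbr : b < Real.sqrt (1 - l^2) := by
      obtain ⟨y, hy, hyt, hyr⟩ := rho_small d h0 h1 t
      exact (hb.trans_le (rho_le d hy hyt)).trans_le hyr
    have hpos : ∀ x : Euc d, ‖x - xStar d l‖ ≤ b → 0 < x 0 := by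
      intro x hx
      have hb0 := (norm_nonneg _).trans hx
      have h2 : ‖x - xStar d l‖^2 ≤ b^2 := by gcongr
      have h3 := x_le_norm d (x - xStar d l)
      simp only [PiLp.sub_apply, xStar_zero] at h3
      have h4 : (x 0 - Real.sqrt (1 - l^2))^2 ≤ b^2 := by
        nlinarith [sq_nonneg (x 1 - (xStar d l) 1)]
      have h5 := abs_le_of_sq_le_sq h4 hb0
      have := (abs_le.1 h5).1
      linarith
    have hC : IsCompact {x : Euc d | ‖x - xStar d l‖ ≤ b ∧ x 0 ≤ 1} := by
      have c0 : Continuous (fun x : Euc d => x 0) := by fun_prop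
      apply (isCompact_closedBall (xStar d l) b).of_isClosed_subset
        ((isClosed_le (Dcont d l) continuous_const).inter (isClosed_le c0 continuous_const))
      rintro x ⟨hx, _⟩
      rw [mem_closedBall, dist_eq_norm]; exact hx
    rcases Set.eq_empty_or_nonempty {x : Euc d | ‖x - xStar d l‖ ≤ b ∧ x 0 ≤ 1} with he | hne
    · apply Eventually.of_forall
      intro s
      apply hab.trans_le
      apply le_rho d h0 h1
      intro x hx hxt
      by_contra hlt
      have : x ∈ (∅ : Set (Euc d)) := by
        rw [← he]; exact ⟨(not_le.1 hlt).le, hx.2⟩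
      exact this
    · obtain ⟨z, hz, hmax⟩ := hC.exists_isMaxOn hne (f := U d l)
        (fun x hx => (U_cont d l (hpos x hx.1)).continuousWithinAt)
      have hzt : U d l z < t := by
        by_contra hlt
        have := rho_le d (l := l) (t := t) (y := z) ⟨hpos z hz.1, hz.2⟩ (not_lt.1 hlt)
        linarith [hz.1]
      filter_upwards [lt_mem_nhds hzt] with s hs
      apply hab.trans_le
      apply le_rho d h0 h1
      intro x hx hxt
      by_contra hlt
      have : U d l x ≤ U d l z := hmax (show x ∈ _ from ⟨(not_le.1 hlt).le, hx.2⟩)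
      linarith
  · intro a ha
    obtain ⟨w, ⟨x, ⟨hx, hxt⟩, rfl⟩, hxa⟩ := exists_lt_of_csInf_lt (rho_ne d h0 h1 t) ha
    obtain ⟨γ, hγ, hγ0, H⟩ := pert1 d l hx
    have h2 : Continuous (fun η => ‖γ η - xStar d l‖) := by fun_prop
    have h3 : ∀ᶠ η in nhdsWithin (0:ℝ) (Ioi 0), ‖γ η - xStar d l‖ < a := by
      apply nhdsWithin_le_nhds
      apply h2.continuousAt.eventually (gt_mem_nhds _)
      simp only [hγ0]; exact hxa
    obtain ⟨η, hη, hη0⟩ := (h3.and self_mem_nhdsWithin).exists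
    have hh := H η hη0
    filter_upwards [gt_mem_nhds (hxt.trans_lt hh.2.2)] with s hs
    exact (rho_le d hh.1 (le_of_lt hs)).trans_lt hη

lemma alp_eq (d : ℕ) {l : ℝ} (h0 : 0 ≤ l) (h1 : l < 1) (t : ℝ) :
    alp d l t = g d l (rho d l t) := by
  unfold rho
  rw [Monotone.map_csInf_of_continuousAt (g_cont d h0 h1).continuousAt (g_mono d h0 h1)
    (rho_ne d h0 h1 t) (rho_bdd d l t)]
  unfold alp
  congr 1
  ext w
  constructor
  · rintro ⟨y, hy, ht, rfl⟩
    exact ⟨_, ⟨y, ⟨hy, ht⟩, rfl⟩, rfl⟩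
  · rintro ⟨_, ⟨y, ⟨hy, ht⟩, rfl⟩, rfl⟩
    exact ⟨y, hy, ht, rfl⟩

/-- For `λ ∈ [0,1)`, the function `α : [0,∞) → [0,∞)` is non-decreasing,
non-negative, continuous, and positive definite: `α(t) = 0` iff `t = 0`. -/
theorem stmt9 (d : ℕ) (lam : ℝ) (h0 : 0 ≤ lam) (h1 : lam < 1) :
    (∀ s t : ℝ, 0 ≤ s → s ≤ t → alp d lam s ≤ alp d lam t) ∧
    (∀ t : ℝ, 0 ≤ t → 0 ≤ alp d lam t) ∧
    ContinuousOn (alp d lam) (Ici 0) ∧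
    (∀ t : ℝ, 0 ≤ t → (alp d lam t = 0 ↔ t = 0)) := by
  have he : alp d lam = fun t => g d lam (rho d lam t) := funext (alp_eq d h0 h1)
  refine ⟨?_, ?_, ?_, ?_⟩
  · intro s t _ hst
    simp only [he]
    exact g_mono d h0 h1 (rho_mono d h0 h1 hst)
  · intro t _
    simp only [he]
    exact g_nonneg d h0 h1 _
  · rw [he]
    exact ((g_cont d h0 h1).comp (rho_cont d h0 h1)).continuousOn
  · intro t ht
    simp only [he]
    constructor
    · intro h
      by_contra hne
      have := g_pos d h0 h1 (rho_pos d h0 h1 (lt_of_le_of_ne ht (Ne.symm hne)))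
      linarith
    · rintro rfl
      rw [rho_zero d h0 h1, g_zero d h0 h1]
end
end

section
/- Let d ≥ 2 and λ ∈ [0,1). Let T x = (x₁/‖x‖) e₁ + ((1 − 1/‖x‖) x₂ + λ) e₂ + (1 − 1/‖x‖) ∑_{j=3}^d x_j e_j and x* = √(1−λ²) e₁ + λ e₂. Then for every compact set K ⊆ H₊, the iterates T^n converge uniformly to x* on K: for every ε > 0 there exists N such that ‖T^n x − x*‖ ≤ ε for all n ≥ N and all x ∈ K. -/
noncomputable section

open Metric Set Filter

/-- `H₊ = {x : x₁ > 0}`. -/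
def Hplus (d : ℕ) : Set (Euc d) := {x | 0 < x 0}

def QQ (d : ℕ) (x : Euc d) : ℝ := ∑ j : Fin d, (x j.succ.succ) ^ 2

/-- Lyapunov function. -/
def VV (d : ℕ) (lam : ℝ) (x : Euc d) : ℝ :=
  ((x 1 - lam) ^ 2 + QQ d x) / 2 + (x 0) ^ 2 / 4 - (1 - lam ^ 2) / 2 * Real.log (x 0)

/-- Decrease of the Lyapunov function. -/
def DD (d : ℕ) (lam : ℝ) (x : Euc d) : ℝ :=
  ‖x‖ * ((x 1 / ‖x‖ - lam) ^ 2 + QQ d x / ‖x‖ ^ 2) / 2 + (x 0 - x 0 / ‖x‖) ^ 2 / 4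
    + (1 - lam ^ 2) / 2 * (‖x‖ - 1 - Real.log ‖x‖)

lemma QQ_nonneg (d : ℕ) (x : Euc d) : 0 ≤ QQ d x := by
  unfold QQ; positivity

lemma normsq (d : ℕ) (x : Euc d) : ‖x‖ ^ 2 = x 0 ^ 2 + x 1 ^ 2 + QQ d x := by
  rw [EuclideanSpace.norm_sq_eq, Fin.sum_univ_succ, Fin.sum_univ_succ]
  simp [QQ, add_assoc]

lemma DR_0 (d : ℕ) (lam : ℝ) (x : Euc d) : DR d lam x 0 = x 0 / ‖x‖ := by
  simp [DR, e, Finset.sum_apply, Pi.single_apply]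

lemma DR_1 (d : ℕ) (lam : ℝ) (x : Euc d) : DR d lam x 1 = (1 - 1 / ‖x‖) * x 1 + lam := by
  simp [DR, e, Finset.sum_apply, Pi.single_apply]

lemma DR_s (d : ℕ) (lam : ℝ) (x : Euc d) (j : Fin d) :
    DR d lam x j.succ.succ = (1 - 1 / ‖x‖) * x j.succ.succ := by
  have h1 : j.succ.succ ≠ (1 : Fin (d + 2)) := by
    intro h; have := congrArg Fin.val h; simp at this
  simp [DR, e, Finset.sum_apply, Pi.single_apply, h1]

lemma QQ_DR (d : ℕ) (lam : ℝ) (x : Euc d) :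
    QQ d (DR d lam x) = (1 - 1 / ‖x‖) ^ 2 * QQ d x := by
  simp only [QQ, DR_s, mul_pow, Finset.mul_sum]

lemma xStar_0 (d : ℕ) (lam : ℝ) : xStar d lam 0 = Real.sqrt (1 - lam ^ 2) := by
  simp [xStar, e, Pi.single_apply]

lemma xStar_1 (d : ℕ) (lam : ℝ) : xStar d lam 1 = lam := by
  simp [xStar, e, Pi.single_apply]

lemma xStar_s (d : ℕ) (lam : ℝ) (j : Fin d) : xStar d lam j.succ.succ = 0 := by
  have h1 : j.succ.succ ≠ (1 : Fin (d + 2)) := by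
    intro h; have := congrArg Fin.val h; simp at this
  simp [xStar, e, Pi.single_apply, h1]

lemma dist_sq (d : ℕ) (lam : ℝ) (x : Euc d) :
    ‖x - xStar d lam‖ ^ 2 = (x 0 - Real.sqrt (1 - lam ^ 2)) ^ 2 + (x 1 - lam) ^ 2 + QQ d x := by
  rw [normsq]
  simp [QQ, xStar_0, xStar_1, xStar_s]

lemma norm_pos_of (d : ℕ) (x : Euc d) (hx : 0 < x 0) : 0 < ‖x‖ := by
  rw [norm_pos_iff]; rintro rfl; simp at hx

lemma VV_sub (d : ℕ) (lam : ℝ) (x : Euc d) (hx : 0 < x 0) :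
    VV d lam x - VV d lam (DR d lam x) = DD d lam x := by
  have hr := norm_pos_of d x hx
  have hQ : QQ d x = ‖x‖ ^ 2 - x 0 ^ 2 - x 1 ^ 2 := by rw [normsq]; ring
  unfold VV DD
  rw [QQ_DR, DR_0, DR_1, hQ, Real.log_div hx.ne' hr.ne']
  field_simp
  ring

lemma VV_ge (d : ℕ) (lam : ℝ) (h : 0 < 1 - lam ^ 2) (x : Euc d) (hx : 0 < x 0) :
    ‖x - xStar d lam‖ ^ 2 / 4 ≤ VV d lam x - VV d lam (xStar d lam) := by
  have hQ := QQ_nonneg d x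
  have hQs : QQ d (xStar d lam) = 0 := by simp [QQ, xStar_s]
  rw [dist_sq]
  unfold VV
  rw [hQs, xStar_0, xStar_1]
  set c := Real.sqrt (1 - lam ^ 2) with hc
  have hc2 : 1 - lam ^ 2 = c ^ 2 := (Real.sq_sqrt h.le).symm
  have hcp : 0 < c := Real.sqrt_pos.2 h
  rw [hc2]
  have hl := Real.log_le_sub_one_of_pos (div_pos hx hcp)
  rw [Real.log_div hx.ne' hcp.ne'] at hl
  have h3 : c ^ 2 * (Real.log (x 0) - Real.log c) ≤ c * x 0 - c ^ 2 := by
    calc _ ≤ c ^ 2 * (x 0 / c - 1) := by gcongr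
      _ = _ := by field_simp
  nlinarith [sq_nonneg (x 1 - lam)]

lemma DD_nonneg (d : ℕ) (lam : ℝ) (h : 0 < 1 - lam ^ 2) (x : Euc d) (hx : 0 < x 0) :
    0 ≤ DD d lam x := by
  have hr := norm_pos_of d x hx
  have hQ := QQ_nonneg d x
  have hl := Real.log_le_sub_one_of_pos hr
  have : 0 ≤ ‖x‖ - 1 - Real.log ‖x‖ := by linarith
  unfold DD
  positivity

lemma DD_pos (d : ℕ) (lam : ℝ) (h : 0 < 1 - lam ^ 2) (x : Euc d) (hx : 0 < x 0)
    (hne : x ≠ xStar d lam) : 0 < DD d lam x := by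
  have hr := norm_pos_of d x hx
  have hQ := QQ_nonneg d x
  by_cases h1 : ‖x‖ = 1
  · have hn := normsq d x
    have hp : 0 < ‖x - xStar d lam‖ ^ 2 := by
      have : 0 < ‖x - xStar d lam‖ := norm_pos_iff.2 (sub_ne_zero.2 hne)
      positivity
    rw [dist_sq] at hp
    unfold DD
    rw [h1] at hn ⊢
    simp only [div_one, one_pow, Real.log_one, sub_self, mul_zero, add_zero, one_mul]
    by_contra hcon
    have hA : (x 1 - lam) ^ 2 = 0 := by nlinarith [sq_nonneg (x 1 - lam)]
    have hB : QQ d x = 0 := by nlinarith [sq_nonneg (x 1 - lam)]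
    have hx1 : x 1 = lam := by have := pow_eq_zero_iff (two_ne_zero) |>.1 hA; linarith
    have : x 0 = Real.sqrt (1 - lam ^ 2) := by
      rw [eq_comm, Real.sqrt_eq_iff_mul_self_eq h.le hx.le]
      rw [hB, hx1] at hn; nlinarith
    rw [hA, hB, this] at hp
    simp at hp
  · have hl := Real.log_lt_sub_one_of_pos hr h1
    have : 0 < ‖x‖ - 1 - Real.log ‖x‖ := by linarith
    unfold DD
    positivity

lemma cont_VV (d : ℕ) (lam : ℝ) : ContinuousOn (VV d lam) (Hplus d) := by
  unfold VV QQ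
  have : ContinuousOn (fun x : Euc d => Real.log (x 0)) (Hplus d) :=
    ContinuousOn.log (by fun_prop) (fun x hx => ne_of_gt hx)
  fun_prop

lemma cont_DD (d : ℕ) (lam : ℝ) : ContinuousOn (DD d lam) (Hplus d) := by
  unfold DD QQ
  have hne : ∀ x ∈ Hplus d, ‖x‖ ≠ 0 := fun x hx => (norm_pos_of d x hx).ne'
  have hne2 : ∀ x ∈ Hplus d, ‖x‖ ^ 2 ≠ 0 := fun x hx => pow_ne_zero _ (hne x hx)
  have : ContinuousOn (fun x : Euc d => Real.log ‖x‖) (Hplus d) :=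
    ContinuousOn.log (by fun_prop) hne
  fun_prop (disch := assumption)

lemma iter_mem (d : ℕ) (lam : ℝ) (x : Euc d) (hx : 0 < x 0) (n : ℕ) :
    0 < ((DR d lam)^[n] x) 0 := by
  induction n with
  | zero => simpa
  | succ n ih =>
    rw [Function.iterate_succ_apply', DR_0]
    exact div_pos ih (norm_pos_of d _ ih)

lemma VV_anti (d : ℕ) (lam : ℝ) (h : 0 < 1 - lam ^ 2) (x : Euc d) (hx : 0 < x 0) :
    Antitone (fun n => VV d lam ((DR d lam)^[n] x)) := by
  apply antitone_nat_of_succ_le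
  intro n
  rw [Function.iterate_succ_apply']
  have := iter_mem d lam x hx n
  linarith [VV_sub d lam _ this, DD_nonneg d lam h _ this]

/-- For `λ ∈ [0,1)` and every compact `K ⊆ H₊`, the iterates `T^n`
converge uniformly to `x*` on `K`. -/
theorem stmt14 (d : ℕ) (lam : ℝ) (h0 : 0 ≤ lam) (h1 : lam < 1) :
    ∀ K : Set (Euc d), K ⊆ Hplus d → IsCompact K →
      ∀ ε : ℝ, 0 < ε → ∃ N : ℕ, ∀ n ≥ N, ∀ x ∈ K,
        ‖(DR d lam)^[n] x - xStar d lam‖ ≤ ε := by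
  intro K hK hKc ε hε
  have h : 0 < 1 - lam ^ 2 := by nlinarith
  have hs : xStar d lam ∈ Hplus d := by
    show 0 < xStar d lam 0
    rw [xStar_0]; exact Real.sqrt_pos.2 h
  have hopen : IsOpen (Hplus d) := by
    have : Continuous (fun x : Euc d => x 0) := by fun_prop
    exact isOpen_lt continuous_const this
  -- bound on K
  obtain ⟨M, hM⟩ := hKc.bddAbove_image ((cont_VV d lam).mono hK)
  have hM' : ∀ x ∈ K, VV d lam x ≤ M := fun x hx => hM ⟨x, hx, rfl⟩
  -- small ball
  have hcs : ContinuousAt (VV d lam) (xStar d lam) :=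
    (cont_VV d lam).continuousAt (hopen.mem_nhds hs)
  obtain ⟨η, hη, hball⟩ := Metric.continuousAt_iff.1 hcs (ε ^ 2 / 4) (by positivity)
  -- compact region
  set R : ℝ := 4 * (M - VV d lam (xStar d lam)) with hR
  set m : ℝ := Real.exp (-(2 * M / (1 - lam ^ 2))) with hm
  have hmp : 0 < m := Real.exp_pos _
  let A : Set (Euc d) := Metric.closedBall (xStar d lam) (R + 1) ∩
    {x | m ≤ x 0 ∧ η ≤ ‖x - xStar d lam‖}
  have hAc : IsCompact A := by
    apply (isCompact_closedBall _ _).inter_right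
    apply IsClosed.inter
    · exact isClosed_le continuous_const (by fun_prop : Continuous (fun x : Euc d => x 0))
    · exact isClosed_le continuous_const
        (by fun_prop : Continuous (fun x : Euc d => ‖x - xStar d lam‖))
  have hAH : A ⊆ Hplus d := fun x hx => lt_of_lt_of_le hmp hx.2.1
  have hδ : ∃ δ > 0, ∀ x ∈ A, δ ≤ DD d lam x := by
    rcases A.eq_empty_or_nonempty with hA | hA
    · exact ⟨1, one_pos, by simp [hA]⟩
    · obtain ⟨x0, hx0, hmin⟩ := hAc.exists_isMinOn hA ((cont_DD d lam).mono hAH)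
      refine ⟨DD d lam x0, DD_pos d lam h x0 (hAH hx0) ?_, fun x hx => hmin hx⟩
      rintro rfl
      have := hx0.2.2
      simp at this
      linarith
  obtain ⟨δ, hδp, hδ⟩ := hδ
  obtain ⟨N, hN⟩ := exists_nat_gt ((M - VV d lam (xStar d lam)) / δ)
  rw [div_lt_iff₀ hδp] at hN
  refine ⟨N, fun n hn x hx => ?_⟩
  have hxp : 0 < x 0 := hK hx
  have hanti := VV_anti d lam h x hxp
  have key : ∃ k ≤ N, ‖(DR d lam)^[k] x - xStar d lam‖ < η := by
    by_contra hcon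
    push Not at hcon
    have hind : ∀ k ≤ N, VV d lam ((DR d lam)^[k] x) ≤ M - k * δ := by
      intro k
      induction k with
      | zero => intro _; simpa using hM' x hx
      | succ k ih =>
        intro hk
        have ih := ih (by omega)
        have hp := iter_mem d lam x hxp k
        have hVM : VV d lam ((DR d lam)^[k] x) ≤ M := le_trans (hanti (Nat.zero_le k)) (hM' x hx)
        have hge := VV_ge d lam h _ hp
        have hmem : (DR d lam)^[k] x ∈ A := by
          refine ⟨?_, ?_, hcon k (by omega)⟩
          · rw [Metric.mem_closedBall, dist_eq_norm]
            have : 0 ≤ ‖(DR d lam)^[k] x - xStar d lam‖ := norm_nonneg _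
            nlinarith
          · rw [hm, ← Real.le_log_iff_exp_le hp]
            have hQ := QQ_nonneg d ((DR d lam)^[k] x)
            unfold VV at hVM
            rw [neg_le, le_div_iff₀ h] 
            nlinarith [sq_nonneg (((DR d lam)^[k] x) 1 - lam), sq_nonneg (((DR d lam)^[k] x) 0)]
        have := hδ _ hmem
        rw [← VV_sub d lam _ hp] at this
        rw [Function.iterate_succ_apply']
        push_cast
        linarith
    have h2 := hind N le_rfl
    have h3 := VV_ge d lam h _ (iter_mem d lam x hxp N)
    have : 0 ≤ ‖(DR d lam)^[N] x - xStar d lam‖ ^ 2 := by positivity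
    linarith
  obtain ⟨k, hk, hkη⟩ := key
  have h4 := hball (by rwa [dist_eq_norm] : dist ((DR d lam)^[k] x) (xStar d lam) < η)
  rw [Real.dist_eq] at h4
  have h5 := (abs_lt.1 h4).2
  have h6 : VV d lam ((DR d lam)^[n] x) ≤ VV d lam ((DR d lam)^[k] x) := hanti (hk.trans hn)
  have h7 := VV_ge d lam h _ (iter_mem d lam x hxp n)
  apply le_of_lt; apply lt_of_pow_lt_pow_left₀ 2 hε.le
  linarith
end
end
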